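/- (Proposition 2.) Take the message set to be binary, M = {0,1}. Suppose the observable click probability is independent of Alice's input: Q(a,b) := Σ_{A∈{0,1}} (Σ_i p_i η_i(A,b)) P(A|a) satisfies Q(a₀,b) = Q(a₁,b) for all a₀, a₁ ∈ 𝒜 and all b ∈ ℬ (and Q(a,b) > 0 for all a, b). Then the detection-loophole statistics P_DL(B|a,b) admit a 2-dimensional classical model. In particular, if P_DL does not admit a 2-dimensional classical model, then neither does P(B|a,b) := Σ_{i,A} p_i P_i(B|A,b) P(A|a). -/

import Mathlib

/-- `Q B a b` (the probability of output `B` given inputs `a`, `b`) admits a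
`d`-dimensional classical model: there are a message set of cardinality `d`
(represented by `Fin d`), distributions `S(·|a)` on the messages and
`R(·|A,b)` on the outputs, with `Q(B|a,b) = ∑ A, R(B|A,b) S(A|a)`. -/
def AdmitsClassicalModel {𝒜 ℬ 𝒪 : Type*} [Fintype 𝒜] [Fintype ℬ] [Fintype 𝒪]
    (d : ℕ) (Q : 𝒪 → 𝒜 → ℬ → ℝ) : Prop :=
  ∃ (S : 𝒜 → Fin d → ℝ) (R : Fin d → ℬ → 𝒪 → ℝ),
    (∀ a A, 0 ≤ S a A) ∧ (∀ a, ∑ A, S a A = 1) ∧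
    (∀ A b B, 0 ≤ R A b B) ∧ (∀ A b, ∑ B, R A b B = 1) ∧
    (∀ B a b, Q B a b = ∑ A, R A b B * S a A)

/-!
Conditioning on a click divides a response that is linear in the message distribution `P(·|a)` by
the click probability. When the click probability does not depend on `a`, the statistics are thus
affine in `P(·|a)`. All distributions on two messages lie on a line, so the finitely many `P(·|a)`
lie on the segment between two of them, `P(·|a₀)` and `P(·|a₁)`. Alice can therefore send the index
of one of these two inputs, drawn with the weights of her point on the segment, and Bob reproduces
the statistics of the input named by the message.
-/

theorem collinear_of_forall_sum_eq {𝕜 : Type*} [DivisionRing 𝕜] {s : Set (Fin 2 → 𝕜)} {c : 𝕜}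
    (hs : ∀ x ∈ s, ∑ i, x i = c) : Collinear 𝕜 s := by
  refine (collinear_iff_exists_forall_eq_smul_vadd _).2
    ⟨![0, c], ![1, -1], fun x hx => ⟨x 0, ?_⟩⟩
  have hsum : x 0 + x 1 = c := by simpa using hs x hx
  ext i
  fin_cases i
  · simp
  · simp [← hsum]

section Convexity

variable {𝕜 E ι : Type*} [Field 𝕜] [LinearOrder 𝕜] [IsStrictOrderedRing 𝕜] [AddCommGroup E]
  [Module 𝕜 E]

theorem convexHull_range_eq_image_stdSimplex [Fintype ι] (f : ι → E) :
    convexHull 𝕜 (Set.range f) = Fintype.linearCombination 𝕜 f '' stdSimplex 𝕜 ι := by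
  classical
  rw [← convexHull_rangle_single_eq_stdSimplex, LinearMap.image_convexHull, ← Set.range_comp]
  congr! 2
  ext i
  simp

theorem exists_forall_mem_segment_of_collinear [Finite ι] [Nonempty ι] {f : ι → E}
    (hf : Collinear 𝕜 (Set.range f)) : ∃ i j, ∀ k, f k ∈ segment 𝕜 (f i) (f j) := by
  obtain ⟨x, v, hline⟩ := (collinear_iff_exists_forall_eq_smul_vadd _).1 hf
  choose r hr using fun k => hline (f k) (Set.mem_range_self k)
  have hr_lineMap k : f k = AffineMap.lineMap x (x + v) (r k) := by
    simp [hr k, AffineMap.lineMap_apply]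
  obtain ⟨i, hmin⟩ := Finite.exists_min r
  obtain ⟨j, hmax⟩ := Finite.exists_max r
  refine ⟨i, j, fun k => ?_⟩
  rw [hr_lineMap i, hr_lineMap j, hr_lineMap k, ← image_segment, segment_eq_Icc (hmin j)]
  exact Set.mem_image_of_mem _ ⟨hmin k, hmax k⟩

end Convexity

theorem AdmitsClassicalModel.of_mem_convexHull {𝒜 ℬ 𝒪 : Type*} [Fintype 𝒜] [Fintype ℬ]
    [Fintype 𝒪] {d : ℕ} {Q : 𝒪 → 𝒜 → ℬ → ℝ} {R : Fin d → ℬ → 𝒪 → ℝ}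
    (hR : ∀ A b B, 0 ≤ R A b B) (hR1 : ∀ A b, ∑ B, R A b B = 1)
    (hQ : ∀ a, (fun b B => Q B a b) ∈ convexHull ℝ (Set.range R)) :
    AdmitsClassicalModel d Q := by
  simp only [convexHull_range_eq_image_stdSimplex] at hQ
  choose S hS hSQ using hQ
  refine ⟨S, R, fun a => (hS a).1, fun a => (hS a).2, hR, hR1, fun B a b => ?_⟩
  have hQ_eq := congrFun (congrFun (hSQ a) b) B
  simpa [Fintype.linearCombination_apply, mul_comm] using hQ_eq.symm

section Postselection

variable {E ℬ 𝒪 : Type*} [AddCommGroup E] [Module ℝ E] [Fintype 𝒪]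

/-- The statistics conditioned on a click, when Alice's message is described by `v` and the joint
probability that Bob clicks and outputs `B` on input `b` is `L v b B`. Their value is `0` where the
click probability `∑ B', L v b B'` vanishes. -/
noncomputable def postselect (L : E →ₗ[ℝ] ℬ → 𝒪 → ℝ) (v : E) (b : ℬ) (B : 𝒪) : ℝ :=
  L v b B / ∑ B', L v b B'

variable {L : E →ₗ[ℝ] ℬ → 𝒪 → ℝ} {v : E}

theorem postselect_nonneg {b : ℬ} (hL : ∀ B, 0 ≤ L v b B) (B : 𝒪) : 0 ≤ postselect L v b B :=
  div_nonneg (hL B) (Finset.sum_nonneg fun B' _ => hL B')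

theorem sum_postselect {b : ℬ} (hL : ∑ B, L v b B ≠ 0) : ∑ B, postselect L v b B = 1 := by
  simp only [postselect]
  rw [← Finset.sum_div, div_self hL]

theorem postselect_mem_convexHull_image {s : Set E} (hv : v ∈ convexHull ℝ s)
    (hclick : ∀ w ∈ s, ∀ b, ∑ B, L w b B = ∑ B, L v b B) :
    postselect L v ∈ convexHull ℝ (postselect L '' s) := by
  -- With the normalization held fixed at its value at `v`, postselection is linear.
  let N : E →ₗ[ℝ] ℬ → 𝒪 → ℝ :=
    LinearMap.pi fun b => (∑ B, L v b B)⁻¹ • (LinearMap.proj b ∘ₗ L)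
  have hN {w : E} (hw : ∀ b, ∑ B, L w b B = ∑ B, L v b B) : N w = postselect L w := by
    ext b B
    simp [N, postselect, hw, div_eq_inv_mul]
  rw [← Set.image_congr fun w hw => hN (hclick w hw), ← hN fun _ => rfl,
    ← LinearMap.image_convexHull]
  exact Set.mem_image_of_mem N hv

theorem AdmitsClassicalModel.postselect_of_mem_convexHull {𝒜 : Type*} [Fintype 𝒜] [Fintype ℬ]
    {d : ℕ} {x : 𝒜 → E} {α : Fin d → 𝒜} (hx : ∀ a, x a ∈ convexHull ℝ (Set.range (x ∘ α)))
    (hL : ∀ a b B, 0 ≤ L (x a) b B) (hclick : ∀ a b, ∑ B, L (x a) b B ≠ 0)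
    (hindep : ∀ a₀ a₁ b, ∑ B, L (x a₀) b B = ∑ B, L (x a₁) b B) :
    AdmitsClassicalModel d fun B a b => postselect L (x a) b B := by
  refine .of_mem_convexHull (R := postselect L ∘ x ∘ α)
    (fun A b => postselect_nonneg (hL (α A) b)) (fun A b => sum_postselect (hclick (α A) b))
    fun a => ?_
  rw [Set.range_comp]
  refine postselect_mem_convexHull_image (hx a) ?_
  rintro _ ⟨A, rfl⟩ b
  exact hindep (α A) a b

theorem AdmitsClassicalModel.postselect_of_collinear {𝒜 : Type*} [Fintype 𝒜] [Nonempty 𝒜]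
    [Fintype ℬ] {x : 𝒜 → E} (hx : Collinear ℝ (Set.range x)) (hL : ∀ a b B, 0 ≤ L (x a) b B)
    (hclick : ∀ a b, ∑ B, L (x a) b B ≠ 0)
    (hindep : ∀ a₀ a₁ b, ∑ B, L (x a₀) b B = ∑ B, L (x a₁) b B) :
    AdmitsClassicalModel 2 fun B a b => postselect L (x a) b B := by
  obtain ⟨a₀, a₁, hsegment⟩ := exists_forall_mem_segment_of_collinear hx
  refine .postselect_of_mem_convexHull (α := ![a₀, a₁]) (fun a => ?_) hL hclick hindep
  rw [Set.range_comp, Matrix.range_cons_cons_empty, Set.image_pair, convexHull_pair]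
  exact hsegment a

end Postselection

section DetectionLoophole

variable {M ℬ 𝒪 I : Type*} [Fintype M] [Fintype I]

/-- The joint probability `∑ i A, p i * η i A b * Pi(B|A,b) * v A` that Bob clicks and outputs `B`
on input `b`, bundled as a linear map in the message distribution `v`. -/
def clickResponse (p : I → ℝ) (η : I → M → ℬ → ℝ) (Pi : I → M → ℬ → 𝒪 → ℝ) :
    (M → ℝ) →ₗ[ℝ] ℬ → 𝒪 → ℝ where
  toFun v b B := ∑ i, ∑ A, p i * η i A b * Pi i A b B * v A
  map_add' v w := by
    ext b B
    simp [mul_add, Finset.sum_add_distrib]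
  map_smul' c v := by
    ext b B
    simp [Finset.mul_sum, mul_left_comm]

variable {p : I → ℝ} {η : I → M → ℬ → ℝ} {Pi : I → M → ℬ → 𝒪 → ℝ} {v : M → ℝ}

theorem clickResponse_nonneg (hp : ∀ i, 0 ≤ p i) (hη : ∀ i A b, 0 ≤ η i A b)
    (hPi : ∀ i A b B, 0 ≤ Pi i A b B) (hv : ∀ A, 0 ≤ v A) (b : ℬ) (B : 𝒪) :
    0 ≤ clickResponse p η Pi v b B :=
  Finset.sum_nonneg fun i _ => Finset.sum_nonneg fun A _ =>
    mul_nonneg (mul_nonneg (mul_nonneg (hp i) (hη i A b)) (hPi i A b B)) (hv A)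

theorem sum_clickResponse [Fintype 𝒪] (hPi1 : ∀ i A b, ∑ B, Pi i A b B = 1) (b : ℬ) :
    ∑ B, clickResponse p η Pi v b B = ∑ i, ∑ A, p i * η i A b * v A := by
  simp only [clickResponse, LinearMap.coe_mk, AddHom.coe_mk]
  rw [Finset.sum_comm]
  refine Finset.sum_congr rfl fun i _ => ?_
  rw [Finset.sum_comm]
  refine Finset.sum_congr rfl fun A _ => ?_
  rw [← Finset.sum_mul, ← Finset.mul_sum, hPi1, mul_one]

end DetectionLoophole

theorem prop2_general
    {𝒜 ℬ 𝒪 I M : Type*} [Fintype 𝒜] [Fintype ℬ] [Fintype 𝒪] [Fintype I] [Fintype M] [Nonempty 𝒜]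
    (p : I → ℝ) (hp : ∀ i, 0 ≤ p i)
    (P : 𝒜 → M → ℝ) (hP : ∀ a A, 0 ≤ P a A) (hcol : Collinear ℝ (Set.range P))
    (Pi : I → M → ℬ → 𝒪 → ℝ)
    (hPi : ∀ i A b B, 0 ≤ Pi i A b B) (hPi1 : ∀ i A b, ∑ B, Pi i A b B = 1)
    (η : I → M → ℬ → ℝ) (hη : ∀ i A b, 0 ≤ η i A b)
    (Q : 𝒜 → ℬ → ℝ) (hQ : ∀ a b, Q a b = ∑ A, (∑ i, p i * η i A b) * P a A)
    (hQpos : ∀ a b, 0 < Q a b) (hindep : ∀ a₀ a₁ b, Q a₀ b = Q a₁ b)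
    (PDL : 𝒪 → 𝒜 → ℬ → ℝ)
    (hPDL : ∀ B a b, PDL B a b =
      (∑ i, ∑ A, p i * η i A b * Pi i A b B * P a A) / (∑ i, ∑ A, p i * η i A b * P a A)) :
    AdmitsClassicalModel 2 PDL := by
  have hclick a b : ∑ B, clickResponse p η Pi (P a) b B = Q a b := by
    rw [sum_clickResponse hPi1, hQ, Finset.sum_comm]
    simp only [Finset.sum_mul]
  have hpostselect : PDL = fun B a b => postselect (clickResponse p η Pi) (P a) b B := by
    ext B a b
    rw [hPDL, postselect, sum_clickResponse hPi1]
    rfl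
  rw [hpostselect]
  refine .postselect_of_collinear hcol (fun a => clickResponse_nonneg hp hη hPi (hP a)) ?_ ?_
  · exact fun a b => (hclick a b).trans_ne (hQpos a b).ne'
  · simpa only [hclick] using hindep

/-- Proposition 2: with a binary message set `M = Fin 2`, if the
observable click probability `Q(a,b) = ∑ A, (∑ i, p i * η i A b) * P(A|a)` is
independent of Alice's input `a` (and positive), then the detection-loophole
statistics `P_DL` admit a 2-dimensional classical model; in particular, if
`P_DL` admits no 2-dimensional classical model, then neither do the no-attack
statistics `P(B|a,b) = ∑ i A, p i * Pᵢ(B|A,b) * P(A|a)`. -/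
theorem prop2
    {𝒜 ℬ 𝒪 I : Type*}
    [Fintype 𝒜] [Fintype ℬ] [Fintype 𝒪] [Fintype I]
    [Nonempty 𝒜] [Nonempty ℬ] [Nonempty 𝒪] [Nonempty I]
    (p : I → ℝ) (hp : ∀ i, 0 ≤ p i) (hp1 : ∑ i, p i = 1)
    (P : 𝒜 → Fin 2 → ℝ) (hP : ∀ a A, 0 ≤ P a A) (hP1 : ∀ a, ∑ A, P a A = 1)
    (Pi : I → Fin 2 → ℬ → 𝒪 → ℝ)
    (hPi : ∀ i A b B, 0 ≤ Pi i A b B) (hPi1 : ∀ i A b, ∑ B, Pi i A b B = 1)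
    (η : I → Fin 2 → ℬ → ℝ) (hη : ∀ i A b, 0 ≤ η i A b ∧ η i A b ≤ 1)
    -- the observable click probability
    (Q : 𝒜 → ℬ → ℝ)
    (hQ : ∀ a b, Q a b = ∑ A, (∑ i, p i * η i A b) * P a A)
    (hQpos : ∀ a b, 0 < Q a b)
    -- hypothesis: the click probability is independent of Alice's input
    (hindep : ∀ (a₀ a₁ : 𝒜) (b : ℬ), Q a₀ b = Q a₁ b)
    -- the detection-loophole statistics
    (PDL : 𝒪 → 𝒜 → ℬ → ℝ)
    (hPDL : ∀ B a b, PDL B a b =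
      (∑ i, ∑ A, p i * η i A b * Pi i A b B * P a A) /
      (∑ i, ∑ A, p i * η i A b * P a A)) :
    AdmitsClassicalModel 2 PDL ∧
    (¬ AdmitsClassicalModel 2 PDL →
      ¬ AdmitsClassicalModel 2
        (fun B a b => ∑ i, ∑ A, p i * Pi i A b B * P a A)) := by
  have hPDL_model := prop2_general p hp P hP
    (collinear_of_forall_sum_eq (Set.forall_mem_range.2 hP1)) Pi hPi hPi1 η
    (fun i A b => (hη i A b).1) Q hQ hQpos hindep PDL hPDL
  exact ⟨hPDL_model, absurd hPDL_model⟩
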